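/- (Proposition 1, Markov-order part.) Let d, G, T, k be positive integers with T ≥ k+2, let v : {1, …, T} → {1, …, G} be a regime sequence, and let P = diag(ρ_1, …, ρ_d) with ρ_i ∈ (−1, 1). Let Y_1, …, Y_T be random vectors with values in ℝ^d, jointly Gaussian with mean zero, whose joint covariance matrix (of the concatenation of all Y_t) is positive definite. Assume: (i) [within-regime Markov order k−1] for all t and all m with k ≤ m ≤ t−1 such that v_{t−m} = v_{t−m+1} = ⋯ = v_t, the vector Y_t is conditionally independent of (Y_{t−m}, …, Y_{t−k}) given (Y_{t−k+1}, …, Y_{t−1}); (ii) for every switch time t* (2 ≤ t* ≤ T with v_{t*} ≠ v_{t*−1}): (a) Cov(Y_{t*}, Y_{t*−1}) = P·Cov(Y_{t*−1}, Y_{t*−1}); (b) Y_{t*} is conditionally independent of Y_s given Y_{t*−1} for every 1 ≤ s ≤ t*−2; (c) Cov(Y_{t*+j}, Y_s) = 0 for every j ≥ 1 with t*+j ≤ T and every 1 ≤ s ≤ t*−1. Then the process is Markov of order k: for every t with k+2 ≤ t ≤ T, the vector Y_t is conditionally independent of (Y_1, …, Y_{t−k−1}) given (Y_{t−k}, …,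 Y_{t−1}). -/

import Mathlib

open MeasureTheory ProbabilityTheory

/-- The cross-covariance matrix of two random vectors: entry `(i, j)` is
`E[Xᵢ Yⱼ] − E[Xᵢ] E[Yⱼ]`. -/
noncomputable def covM {Ω : Type*} [MeasurableSpace Ω] (μ : Measure Ω)
    {ι κ : Type*} (X : Ω → ι → ℝ) (Y : Ω → κ → ℝ) : Matrix ι κ ℝ :=
  Matrix.of fun i j =>
    (∫ ω, X ω i * Y ω j ∂μ) - (∫ ω, X ω i ∂μ) * (∫ ω, Y ω j ∂μ)

/-- A random vector (indexed by a finite type) is (jointly) Gaussian if every linear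
combination of its components has a Gaussian distribution on `ℝ`. -/
def IsGaussianVec {Ω : Type*} [MeasurableSpace Ω] (μ : Measure Ω)
    {ι : Type*} [Fintype ι] (X : Ω → ι → ℝ) : Prop :=
  ∀ u : ι → ℝ, ∃ (a : ℝ) (s : NNReal),
    Measure.map (fun ω => ∑ i, u i * X ω i) μ = gaussianReal a s


open scoped RealInnerProductSpace

section Core

variable {H : Type*} [NormedAddCommGroup H] [InnerProductSpace ℝ H]

/-- The span of the vectors `y s j` with `a ≤ s < b`. -/
def blockSpan {d : ℕ} (y : ℕ → Fin d → H) (a b : ℕ) : Submodule ℝ H :=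
  Submodule.span ℝ ((fun q : ℕ × Fin d => y q.1 q.2) '' (Set.Ico a b ×ˢ Set.univ))

variable {d : ℕ} (y : ℕ → Fin d → H)

lemma mem_blockSpan {a b s : ℕ} (has : a ≤ s) (hsb : s < b) (j : Fin d) :
    y s j ∈ blockSpan y a b :=
  Submodule.subset_span ⟨(s, j), ⟨⟨has, hsb⟩, Set.mem_univ _⟩, rfl⟩

lemma blockSpan_le {a b : ℕ} {U : Submodule ℝ H}
    (h : ∀ s j, a ≤ s → s < b → y s j ∈ U) : blockSpan y a b ≤ U := by
  refine Submodule.span_le.2 ?_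
  rintro _ ⟨⟨s, j⟩, ⟨⟨h1, h2⟩, -⟩, rfl⟩
  exact h s j h1 h2

instance (a b : ℕ) : FiniteDimensional ℝ (blockSpan y a b) :=
  FiniteDimensional.span_of_finite ℝ
    (((Set.finite_Ico a b).prod Set.finite_univ).image _)

lemma exists_last_switch {α : Type*} (v : ℕ → α) {t : ℕ}
    (h : ¬ ∀ s, 1 ≤ s → s ≤ t → v s = v t) :
    ∃ τ, 2 ≤ τ ∧ τ ≤ t ∧ v τ ≠ v (τ - 1) ∧ ∀ s, τ ≤ s → s ≤ t → v s = v t := by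
  classical
  push Not at h
  obtain ⟨s, hs1, hst, hne⟩ := h
  set r := Nat.findGreatest (fun s => v s ≠ v t) t with hr
  have hrv : v r ≠ v t := Nat.findGreatest_spec (P := fun s => v s ≠ v t) hst hne
  have hsr : s ≤ r := Nat.le_findGreatest hst hne
  have hrt : r ≤ t := Nat.findGreatest_le t
  have hrt' : r ≠ t := fun h => hrv (by rw [h])
  have hconst : ∀ u, r + 1 ≤ u → u ≤ t → v u = v t := fun u hu hut => by
    by_contra hcon
    exact Nat.findGreatest_is_greatest (P := fun s => v s ≠ v t) (Nat.lt_of_succ_le hu) hut hcon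
  refine ⟨r + 1, by omega, by omega, ?_, hconst⟩
  rw [hconst (r + 1) le_rfl (by omega)]
  exact hrv.symm

/-- Hilbert-space form of the Markov property: if the within-regime regression has order `k - 1`
and the switching conditions hold for the Gram matrix, then every `y t i` differs from an element
of the span of the last `k` blocks by a vector orthogonal to the whole past. -/
lemma exists_mem_blockSpan_orthogonal_past {α : Type*} (v : ℕ → α) (ρ : Fin d → ℝ)
    {k T : ℕ} (hk : 0 < k)
    (hwithin : ∀ t m, t ≤ T → k ≤ m → m + 1 ≤ t → (∀ s, t - m ≤ s → s ≤ t → v s = v t) →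
      ∀ i, ∀ p ∈ blockSpan y (t - k + 1) t,
        (∀ w ∈ blockSpan y (t - k + 1) t, ⟪y t i - p, w⟫ = 0) →
        ∀ s j, t - m ≤ s → s ≤ t - k → ⟪y t i - p, y s j⟫ = 0)
    (hswitch : ∀ τ, 2 ≤ τ → τ ≤ T → v τ ≠ v (τ - 1) →
      ∀ i s j, 1 ≤ s → s < τ → ⟪y τ i - ρ i • y (τ - 1) i, y s j⟫ = 0)
    (hafter : ∀ τ, 2 ≤ τ → τ ≤ T → v τ ≠ v (τ - 1) →
      ∀ r, τ < r → r ≤ T → ∀ s, 1 ≤ s → s < τ → ∀ i j, ⟪y r i, y s j⟫ = 0)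
    {t : ℕ} (hkt : k + 2 ≤ t) (htT : t ≤ T) (i : Fin d) :
    ∃ p ∈ blockSpan y (t - k) t, ∀ s j, 1 ≤ s → s < t → ⟪y t i - p, y s j⟫ = 0 := by
  have hmono : blockSpan y (t - k + 1) t ≤ blockSpan y (t - k) t :=
    blockSpan_le y fun s j h1 h2 => mem_blockSpan y (by omega) h2 j
  have hproj : ∀ (U : Submodule ℝ H) [FiniteDimensional ℝ U],
      ∃ p ∈ U, ∀ w ∈ U, ⟪y t i - p, w⟫ = 0 := fun U _ =>
    ⟨U.starProjection (y t i), U.starProjection_apply_mem _,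
      U.starProjection_inner_eq_zero _⟩
  by_cases hall : ∀ s, 1 ≤ s → s ≤ t → v s = v t
  · obtain ⟨p, hpU, hp⟩ := hproj (blockSpan y (t - k + 1) t)
    refine ⟨p, hmono hpU, fun s j hs hst => ?_⟩
    by_cases hsk : t - k + 1 ≤ s
    · exact hp _ (mem_blockSpan y hsk hst j)
    · exact hwithin t (t - 1) htT (by omega) (by omega)
        (fun u hu hut => hall u (by omega) hut) i p hpU hp s j (by omega) (by omega)
  obtain ⟨τ, hτ2, hτt, hτv, hconst⟩ := exists_last_switch v hall
  have hτT := hτt.trans htT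
  rcases hτt.eq_or_lt with rfl | hlt
  · exact ⟨ρ i • y (τ - 1) i,
      Submodule.smul_mem _ _ (mem_blockSpan y (by omega) (by omega) i),
      hswitch τ hτ2 hτT hτv i⟩
  by_cases hτk : τ ≤ t - k
  · obtain ⟨p, hpU, hp⟩ := hproj (blockSpan y (t - k + 1) t)
    refine ⟨p, hmono hpU, fun s j hs hst => ?_⟩
    by_cases hsk : t - k + 1 ≤ s
    · exact hp _ (mem_blockSpan y hsk hst j)
    by_cases hsτ : τ ≤ s
    · exact hwithin t (t - τ) htT (by omega) (by omega)
        (fun u hu hut => hconst u (by omega) hut) i p hpU hp s j (by omega) (by omega)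
    · have hle : blockSpan y (t - k + 1) t ≤ (ℝ ∙ y s j)ᗮ := blockSpan_le y fun u l hu hut =>
        Submodule.mem_orthogonal_singleton_iff_inner_left.2
          (hafter τ hτ2 hτT hτv u (by omega) (by omega) s hs (by omega) l j)
      rw [inner_sub_left, hafter τ hτ2 hτT hτv t hlt htT s hs (by omega) i j,
        Submodule.mem_orthogonal_singleton_iff_inner_left.1 (hle hpU), sub_zero]
  · set E : Fin d → H := fun l => y τ l - ρ l • y (τ - 1) l with hE
    have : FiniteDimensional ℝ (Submodule.span ℝ (Set.range E)) :=
      FiniteDimensional.span_of_finite ℝ (Set.finite_range E)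
    obtain ⟨p, hpU, hp⟩ := hproj (Submodule.span ℝ (Set.range E) ⊔ blockSpan y (τ + 1) t)
    have hEU : ∀ l, ⟪y t i - p, E l⟫ = 0 := fun l =>
      hp _ (Submodule.mem_sup_left (Submodule.subset_span ⟨l, rfl⟩))
    have hpast : ∀ s j, 1 ≤ s → s < τ → ⟪y t i - p, y s j⟫ = 0 := fun s j hs hsτ => by
      have hle : Submodule.span ℝ (Set.range E) ⊔ blockSpan y (τ + 1) t ≤ (ℝ ∙ y s j)ᗮ := by
        refine sup_le (Submodule.span_le.2 ?_) (blockSpan_le y fun u l hu hut =>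
          Submodule.mem_orthogonal_singleton_iff_inner_left.2
            (hafter τ hτ2 hτT hτv u (by omega) (by omega) s hs hsτ l j))
        rintro _ ⟨l, rfl⟩
        exact Submodule.mem_orthogonal_singleton_iff_inner_left.2
          (hswitch τ hτ2 hτT hτv l s j hs hsτ)
      rw [inner_sub_left, hafter τ hτ2 hτT hτv t hlt htT s hs hsτ i j,
        Submodule.mem_orthogonal_singleton_iff_inner_left.1 (hle hpU), sub_zero]
    refine ⟨p, ?_, fun s j hs hst => ?_⟩
    · refine sup_le (Submodule.span_le.2 ?_) (blockSpan_le y fun u l hu hut =>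
        mem_blockSpan y (by omega) hut l) hpU
      rintro _ ⟨l, rfl⟩
      exact Submodule.sub_mem _ (mem_blockSpan y (by omega) hlt l)
        (Submodule.smul_mem _ _ (mem_blockSpan y (by omega) (by omega) l))
    rcases lt_trichotomy s τ with hsτ | rfl | hsτ
    · exact hpast s j hs hsτ
    · have hdec : y s j = E j + ρ j • y (s - 1) j := by simp [hE]
      rw [hdec, inner_add_right, hEU, inner_smul_right, hpast (s - 1) j (by omega) (by omega)]
      simp
    · exact hp _ (Submodule.mem_sup_right (mem_blockSpan y (by omega) hst j))

end Core

section Prob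

/-- Conditional expectations of products of conditionally independent variables factor. -/
lemma ProbabilityTheory.CondIndepFun.condExp_mul {Ω : Type*} {m mΩ : MeasurableSpace Ω}
    [StandardBorelSpace Ω] {μ : Measure Ω} [IsFiniteMeasure μ] {hm : m ≤ mΩ} {f g : Ω → ℝ}
    (h : CondIndepFun m hm f g μ) (hf : Measurable f) (hg : Measurable g)
    (hfi : Integrable f μ) (hgi : Integrable g μ) (hfg : Integrable (fun ω => f ω * g ω) μ) :
    μ[fun ω => f ω * g ω | m] =ᵐ[μ] fun ω => μ[f | m] ω * μ[g | m] ω := by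
  have h' := ae_of_ae_trim hm ((condIndepFun_iff_map_prod_eq_prod_map_map hf hg).1 h)
  filter_upwards [h', condExp_ae_eq_integral_condExpKernel hm hfi,
    condExp_ae_eq_integral_condExpKernel hm hgi,
    condExp_ae_eq_integral_condExpKernel hm hfg] with ω h1 h2 h3 h4
  rw [h2, h3, h4]
  have hind : IndepFun f g (condExpKernel μ m ω) := by
    rw [indepFun_iff_map_prod_eq_prod_map_map hf.aemeasurable hg.aemeasurable]
    rw [Kernel.map_apply _ (hf.prodMk hg), Kernel.prod_apply, Kernel.map_apply _ hf,
      Kernel.map_apply _ hg] at h1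
    exact h1
  exact hind.integral_fun_mul_eq_mul_integral hf.aestronglyMeasurable hg.aestronglyMeasurable

/-- If `f` and `z` are conditionally independent given `m` and `g` is the regression of `f` on `m`,
then the residual `f - g` is orthogonal to `z`. -/
lemma ProbabilityTheory.CondIndepFun.integral_residual_mul_eq_zero {Ω : Type*}
    {m mΩ : MeasurableSpace Ω} [StandardBorelSpace Ω] {μ : Measure Ω} [IsProbabilityMeasure μ]
    {hm : m ≤ mΩ} {f g z : Ω → ℝ}
    (h : CondIndepFun m hm f z μ) (hf : Measurable f) (hz : Measurable z)
    (hf2 : MemLp f 2 μ) (hg2 : MemLp g 2 μ) (hz2 : MemLp z 2 μ)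
    (hgm : StronglyMeasurable[m] g) (hres : μ[fun ω => f ω - g ω | m] =ᵐ[μ] fun _ => 0) :
    ∫ ω, (f ω - g ω) * z ω ∂μ = 0 := by
  have hfi := hf2.integrable (by norm_num)
  have hzi := hz2.integrable (by norm_num)
  have hgi := hg2.integrable (by norm_num)
  have hfg : μ[f | m] =ᵐ[μ] g := by
    have h1 := condExp_sub hfi hgi m
    rw [condExp_of_stronglyMeasurable hm hgm hgi] at h1
    filter_upwards [h1, hres] with ω h1 h2
    have h3 : (μ[f - g | m]) ω = 0 := h2
    rw [h3, Pi.sub_apply] at h1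
    linarith
  have hprod : μ[fun ω => f ω * z ω | m] =ᵐ[μ] μ[fun ω => g ω * z ω | m] := by
    filter_upwards [h.condExp_mul hf hz hfi hzi (hf2.integrable_mul hz2),
      condExp_mul_of_stronglyMeasurable_left hgm (hg2.integrable_mul hz2) hzi, hfg]
      with ω h1 h2 h3
    rw [h1, h3]
    exact h2.symm
  have hint := integral_congr_ae hprod
  rw [integral_condExp hm, integral_condExp hm] at hint
  simp only [sub_mul]
  exact (integral_sub (hf2.integrable_mul hz2) (hg2.integrable_mul hz2)).trans
    (sub_eq_zero.2 hint)

variable {Ω : Type*} [MeasurableSpace Ω] {μ : Measure Ω}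

lemma condDistrib_ae_eq_of_indepFun [IsProbabilityMeasure μ]
    {α β γ δ : Type*} [MeasurableSpace α] [MeasurableSpace β] [MeasurableSpace γ]
    [MeasurableSpace δ] [StandardBorelSpace δ] [Nonempty δ]
    {U : Ω → α} {R : Ω → β} (hU : Measurable U) (hR : Measurable R) (hUR : IndepFun U R μ)
    {c : α → γ} (hc : Measurable c) {φ : γ × β → δ} (hφ : Measurable φ) :
    condDistrib (fun ω => φ (c (U ω), R ω)) U μ =ᵐ[μ.map U]
      ((Kernel.id ×ₖ Kernel.const γ (μ.map R)).map φ).comap c hc := by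
  have : IsProbabilityMeasure (μ.map R) := Measure.isProbabilityMeasure_map hR.aemeasurable
  have : IsProbabilityMeasure (μ.map U) := Measure.isProbabilityMeasure_map hU.aemeasurable
  have hX : Measurable fun ω => φ (c (U ω), R ω) := by fun_prop
  have : IsMarkovKernel ((Kernel.id ×ₖ Kernel.const γ (μ.map R)).map φ) :=
    Kernel.IsMarkovKernel.map _ hφ
  refine condDistrib_ae_eq_of_measure_eq_compProd U hX.aemeasurable ?_
  refine Measure.ext_of_lintegral _ fun f hf => ?_
  have h1 : μ.map (fun ω => (U ω, φ (c (U ω), R ω)))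
      = ((μ.map U).prod (μ.map R)).map (fun q => (q.1, φ (c q.1, q.2))) := by
    rw [← (indepFun_iff_map_prod_eq_prod_map_map hU.aemeasurable hR.aemeasurable).1 hUR,
      Measure.map_map (by fun_prop) (by fun_prop)]
    rfl
  rw [h1, lintegral_map hf (by fun_prop), lintegral_prod _ (by fun_prop),
    Measure.lintegral_compProd hf]
  refine lintegral_congr fun u => ?_
  rw [Kernel.comap_apply, Kernel.map_apply _ hφ, lintegral_map (by fun_prop) hφ,
    Kernel.prod_apply, Kernel.id_apply, Kernel.const_apply, lintegral_prod _ (by fun_prop),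
    lintegral_dirac' _ (by fun_prop)]

/-- If `R` is independent of `(W, Z)`, every function of `(W, R)` is conditionally independent
of `Z` given `W`. -/
lemma condIndepFun_of_indepFun_prodMk [StandardBorelSpace Ω] [IsProbabilityMeasure μ]
    {β γ δ ζ : Type*} [MeasurableSpace β] [MeasurableSpace γ]
    [MeasurableSpace δ] [StandardBorelSpace δ] [Nonempty δ]
    [MeasurableSpace ζ] [StandardBorelSpace ζ] [Nonempty ζ]
    {W : Ω → γ} {Z : Ω → ζ} {R : Ω → β} (hW : Measurable W) (hZ : Measurable Z)
    (hR : Measurable R) (h : IndepFun (fun ω => (W ω, Z ω)) R μ)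
    {φ : γ × β → δ} (hφ : Measurable φ) :
    CondIndepFun (MeasurableSpace.comap W inferInstance) hW.comap_le
      (fun ω => φ (W ω, R ω)) Z μ := by
  refine CondIndepFun.symm ?_
  rw [condIndepFun_iff_condDistrib_prod_ae_eq_prodMkRight (by fun_prop) hZ hW]
  have h1 := condDistrib_ae_eq_of_indepFun (hW.prodMk hZ) hR h measurable_fst hφ
  have h2 := condDistrib_ae_eq_of_indepFun hW hR (h.comp measurable_fst measurable_id)
    measurable_id hφ
  have h3 : (μ.map fun ω => (W ω, Z ω)).map Prod.fst = μ.map W := by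
    rw [Measure.map_map measurable_fst (hW.prodMk hZ)]; rfl
  have h4 := ae_of_ae_map measurable_fst.aemeasurable (h3.symm ▸ h2)
  filter_upwards [h1, h4] with q hq1 hq2
  rw [Kernel.prodMkRight_apply]
  exact hq1.trans hq2.symm

lemma ProbabilityTheory.CondIndepFun.congr_measurableSpace {Ω β γ : Type*}
    {m m' mΩ : MeasurableSpace Ω}
    [StandardBorelSpace Ω] {μ : Measure Ω} [IsFiniteMeasure μ] [MeasurableSpace β]
    [MeasurableSpace γ] {f : Ω → β} {g : Ω → γ} {hm : m ≤ mΩ} (h : CondIndepFun m hm f g μ)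
    (hmm : m = m') (hm' : m' ≤ mΩ) : CondIndepFun m' hm' f g μ := by
  subst hmm
  exact h

lemma comap_uncurry_eq {Ω α β : Type*} (X : α → Ω → β → ℝ) :
    MeasurableSpace.comap (fun ω (q : α × β) => X q.1 ω q.2) inferInstance
      = MeasurableSpace.comap (fun ω j => X j ω) inferInstance := by
  refine le_antisymm ?_ ?_
  · exact Measurable.comap_le <| (show Measurable fun (u : α → β → ℝ) (q : α × β) => u q.1 q.2 by
      fun_prop).comp (comap_measurable fun ω j => X j ω)
  · exact Measurable.comap_le <| (show Measurable fun (u : α × β → ℝ) j i => u (j, i) by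
      fun_prop).comp (comap_measurable fun ω (q : α × β) => X q.1 ω q.2)

end Prob

section Gauss

variable {Ω ι : Type*} [MeasurableSpace Ω] {μ : Measure Ω}

lemma IsGaussianVec.hasGaussianLaw [Fintype ι] {X : Ω → ι → ℝ} (hX : Measurable X)
    (h : IsGaussianVec μ X) : HasGaussianLaw X μ where
  isGaussian_map := by
    classical
    refine isGaussian_of_isGaussian_map fun L => ?_
    obtain ⟨a, s, has⟩ := h fun i => L (Pi.single i 1)
    have hL : (fun ω => ∑ i, L (Pi.single i 1) * X ω i) = L ∘ X := by
      ext ω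
      conv_rhs => rw [Function.comp_apply, ← Finset.univ_sum_single (X ω), map_sum]
      refine Finset.sum_congr rfl fun i _ => ?_
      rw [show Pi.single i (X ω i) = X ω i • (Pi.single i 1 : ι → ℝ) by
        rw [← Pi.single_smul, smul_eq_mul, mul_one], map_smul, smul_eq_mul, mul_comm]
    rw [Measure.map_map L.continuous.measurable hX, ← hL, has]
    infer_instance

lemma inner_toLp {f g : Ω → ℝ} (hf : MemLp f 2 μ) (hg : MemLp g 2 μ) :
    ⟪hf.toLp f, hg.toLp g⟫ = ∫ ω, f ω * g ω ∂μ := by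
  rw [L2.inner_def]
  refine integral_congr_ae ?_
  filter_upwards [hf.coeFn_toLp, hg.coeFn_toLp] with ω h1 h2
  simp [h1, h2, mul_comm]

variable {F : ι → Ω → ℝ} (hL : ∀ i, MemLp (F i) 2 μ)

lemma exists_coeff_of_mem_span {κ : Type*} [Fintype κ] {a : κ → ι}
    {p : Lp ℝ 2 μ} (hp : p ∈ Submodule.span ℝ (Set.range fun j => (hL (a j)).toLp (F (a j)))) :
    ∃ c : κ → ℝ, ∃ h : MemLp (fun ω => ∑ j, c j * F (a j) ω) 2 μ, p = h.toLp _ := by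
  obtain ⟨c, rfl⟩ := (Submodule.mem_span_range_iff_exists_fun ℝ).1 hp
  refine ⟨c, memLp_finsetSum _ fun j _ => (hL (a j)).const_mul (c j), ?_⟩
  refine Lp.ext ?_
  refine (Lp.coeFn_finsetSum _ _).trans ?_
  refine Filter.EventuallyEq.trans ?_ (MemLp.coeFn_toLp _).symm
  have h1 : ∀ᵐ ω ∂μ, ∀ j, (c j • (hL (a j)).toLp (F (a j)) : Lp ℝ 2 μ) ω = c j * F (a j) ω :=
    ae_all_iff.2 fun j => by
      filter_upwards [Lp.coeFn_smul (c j) ((hL (a j)).toLp (F (a j))), (hL (a j)).coeFn_toLp]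
        with ω h1 h2
      rw [h1, Pi.smul_apply, h2, smul_eq_mul]
  filter_upwards [h1] with ω h1
  simp [h1]

lemma integral_residual_eq_zero {κ : Type*} [Fintype κ] {a : κ → ι}
    [IsProbabilityMeasure μ] (hL : ∀ i, MemLp (F i) 2 μ) (hmean : ∀ i, ∫ ω, F i ω ∂μ = 0)
    (i : ι) (c : κ → ℝ) :
    ∫ ω, F i ω - ∑ j, c j * F (a j) ω ∂μ = 0 := by
  rw [integral_sub ((hL i).integrable (by norm_num))
      (integrable_finsetSum _ fun j _ => ((hL (a j)).integrable (by norm_num)).const_mul _),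
    integral_finsetSum _ fun j _ => ((hL (a j)).integrable (by norm_num)).const_mul _]
  simp [integral_const_mul, hmean]

variable [Fintype ι] [IsProbabilityMeasure μ]

/-- Zero covariance of linear images of a centred Gaussian vector gives independence. -/
lemma indepFun_linear_of_integral_mul_eq_zero {κ θ : Type*} [Fintype κ] [Fintype θ]
    (hG : HasGaussianLaw (fun ω i => F i ω) μ)
    (A : (ι → ℝ) →ₗ[ℝ] (κ → ℝ)) (B : (ι → ℝ) →ₗ[ℝ] (θ → ℝ))
    (hmean : ∀ j, ∫ ω, A (fun i => F i ω) j ∂μ = 0)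
    (h : ∀ j l, ∫ ω, A (fun i => F i ω) j * B (fun i => F i ω) l ∂μ = 0) :
    IndepFun (fun ω => A fun i => F i ω) (fun ω => B fun i => F i ω) μ := by
  have hAB : HasGaussianLaw (fun ω => (A fun i => F i ω, B fun i => F i ω)) μ :=
    hG.map_fun (A.toContinuousLinearMap.prod B.toContinuousLinearMap)
  refine HasGaussianLaw.indepFun_of_covariance_eval (X := fun j ω => A (fun i => F i ω) j)
    (Y := fun l ω => B (fun i => F i ω) l) hAB fun j l => ?_
  have hA := hAB.fst.memLp_two
  have hB := hAB.snd.memLp_two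
  rw [covariance_eq_sub (hA.eval j) (hB.eval l), hmean j, zero_mul, sub_zero]
  exact h j l

/-- For a centred Gaussian family, orthogonality of a regression residual to the regressors
and to further variables implies conditional independence. -/
lemma condIndepFun_of_residual_orthogonal [StandardBorelSpace Ω]
    {κ θ ε : Type*} [Fintype κ] [Fintype θ] [Fintype ε]
    (hF : ∀ i, Measurable (F i)) (hG : HasGaussianLaw (fun ω i => F i ω) μ)
    (hmean : ∀ i, ∫ ω, F i ω ∂μ = 0) (a : κ → ι) (b : θ → ι) (e : ε → ι)
    (h : ∀ x, ∃ p ∈ Submodule.span ℝ (Set.range fun j => (hL (a j)).toLp (F (a j))),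
      (∀ j, ⟪(hL (e x)).toLp (F (e x)) - p, (hL (a j)).toLp (F (a j))⟫ = 0) ∧
      ∀ l, ⟪(hL (e x)).toLp (F (e x)) - p, (hL (b l)).toLp (F (b l))⟫ = 0) :
    CondIndepFun (MeasurableSpace.comap (fun ω j => F (a j) ω) inferInstance)
      (measurable_pi_lambda _ fun j => hF (a j)).comap_le
      (fun ω x => F (e x) ω) (fun ω l => F (b l) ω) μ := by
  choose p hp hpa hpb using h
  choose c hc hpc using fun x => exists_coeff_of_mem_span hL (hp x)
  set A : (ι → ℝ) →ₗ[ℝ] (ε → ℝ) := LinearMap.pi fun x =>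
    LinearMap.proj (e x) - ∑ j, c x j • LinearMap.proj (a j) with hA
  set B : (ι → ℝ) →ₗ[ℝ] (κ ⊕ θ → ℝ) := LinearMap.funLeft ℝ ℝ (Sum.elim a b) with hB
  have hA' : ∀ ω x, A (fun i => F i ω) x = F (e x) ω - ∑ j, c x j * F (a j) ω := by
    intro ω x; simp [hA]
  have horth : ∀ x i, ⟪(hL (e x)).toLp (F (e x)) - p x, (hL i).toLp (F i)⟫ = 0 →
      ∫ ω, A (fun i => F i ω) x * F i ω ∂μ = 0 := by
    intro x i hxi
    rw [hpc, ← MemLp.toLp_sub, inner_toLp] at hxi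
    simpa only [hA', Pi.sub_apply] using hxi
  have hind := indepFun_linear_of_integral_mul_eq_zero hG A B
    (fun x => by simpa only [hA'] using integral_residual_eq_zero hL hmean (e x) (c x))
    (by
      rintro x (j | l)
      · exact horth x _ (hpa x j)
      · exact horth x _ (hpb x l))
  have hmF : Measurable fun ω i => F i ω := measurable_pi_lambda _ hF
  have hR : Measurable fun ω => A fun i => F i ω :=
    A.toContinuousLinearMap.continuous.measurable.comp hmF
  have hind' : IndepFun (fun ω => ((fun j => F (a j) ω), fun l => F (b l) ω))
      (fun ω => A fun i => F i ω) μ :=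
    hind.symm.comp (φ := fun u : κ ⊕ θ → ℝ => (fun j => u (Sum.inl j), fun l => u (Sum.inr l)))
      (ψ := id) (by fun_prop) measurable_id
  have := condIndepFun_of_indepFun_prodMk (measurable_pi_lambda _ fun j => hF (a j))
    (measurable_pi_lambda _ fun l => hF (b l)) hR hind'
    (φ := fun q : (κ → ℝ) × (ε → ℝ) => fun x => q.2 x + ∑ j, c x j * q.1 j) (by fun_prop)
  simpa only [hA', sub_add_cancel] using this

/-- For a centred Gaussian family, conditional independence implies that the regression
residual is orthogonal to the conditionally independent variable. -/
lemma ProbabilityTheory.CondIndepFun.inner_residual_eq_zero [StandardBorelSpace Ω]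
    {κ : Type*} [Fintype κ]
    (hF : ∀ i, Measurable (F i)) (hG : HasGaussianLaw (fun ω i => F i ω) μ)
    (hmean : ∀ i, ∫ ω, F i ω ∂μ = 0) (a : κ → ι) {i l : ι}
    (h : CondIndepFun (MeasurableSpace.comap (fun ω j => F (a j) ω) inferInstance)
      (measurable_pi_lambda _ fun j => hF (a j)).comap_le (F i) (F l) μ)
    {p : Lp ℝ 2 μ} (hp : p ∈ Submodule.span ℝ (Set.range fun j => (hL (a j)).toLp (F (a j))))
    (hpa : ∀ j, ⟪(hL i).toLp (F i) - p, (hL (a j)).toLp (F (a j))⟫ = 0) :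
    ⟪(hL i).toLp (F i) - p, (hL l).toLp (F l)⟫ = 0 := by
  obtain ⟨c, hc, rfl⟩ := exists_coeff_of_mem_span hL hp
  rw [← MemLp.toLp_sub] at hpa ⊢
  simp only [inner_toLp, Pi.sub_apply] at hpa ⊢
  set A : (ι → ℝ) →ₗ[ℝ] (Unit → ℝ) := LinearMap.pi fun _ =>
    LinearMap.proj i - ∑ j, c j • LinearMap.proj (a j) with hA
  have hA' : ∀ ω x, A (fun i => F i ω) x = F i ω - ∑ j, c j * F (a j) ω := by
    intro ω x; simp [hA]
  have hmean' := integral_residual_eq_zero (a := a) hL hmean i c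
  have hind := indepFun_linear_of_integral_mul_eq_zero hG A (LinearMap.funLeft ℝ ℝ a)
    (fun x => by simpa only [hA'] using hmean')
    (fun x j => by simpa only [hA', LinearMap.funLeft_apply] using hpa j)
  have hind' : IndepFun (fun ω => F i ω - ∑ j, c j * F (a j) ω) (fun ω j => F (a j) ω) μ := by
    have := hind.comp (φ := fun u : Unit → ℝ => u ()) (ψ := id)
      (show Measurable fun u : Unit → ℝ => u () from measurable_pi_apply ()) measurable_id
    simpa only [Function.comp_def, hA'] using! this
  have hmeas : Measurable fun ω => F i ω - ∑ j, c j * F (a j) ω := by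
    have := hF; fun_prop
  refine h.integral_residual_mul_eq_zero (hF i) (hF l) (hL i) hc (hL l) ?_ ?_
  · exact ((show Measurable fun u : κ → ℝ => ∑ j, c j * u j by fun_prop).comp
      (comap_measurable (fun ω j => F (a j) ω))).stronglyMeasurable
  · refine (condExp_indep_eq hmeas.comap_le (measurable_pi_lambda _ fun j => hF (a j)).comap_le
      (comap_measurable _).stronglyMeasurable hind').trans ?_
    rw [hmean']

end Gauss
/-- Proposition 1 of the paper, Markov-order part. Under the within-regime
Markov-order-(k−1) condition and the regime-switching Conditions 3(a)–(c), the full process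
`Y₁, …, Y_T` is Markov of order `k`. -/
theorem margin_closed_regime_switching_markov_order
    {Ω : Type*} [MeasurableSpace Ω] [StandardBorelSpace Ω]
    (Pr : Measure Ω) [IsProbabilityMeasure Pr]
    (d G T k : ℕ) (hd : 0 < d) (hG : 0 < G) (hk : 0 < k) (hT : k + 2 ≤ T)
    (v : ℕ → Fin G)
    (ρ : Fin d → ℝ) (hρ : ∀ i, ρ i ∈ Set.Ioo (-1 : ℝ) 1)
    (Y : ℕ → Ω → Fin d → ℝ) (hYm : ∀ t, Measurable (Y t))
    (hGauss : IsGaussianVec Pr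
      (fun ω (q : Fin T × Fin d) => Y ((q.1 : ℕ) + 1) ω q.2))
    (hmean : ∀ t, 1 ≤ t → t ≤ T → ∀ i, ∫ ω, Y t ω i ∂Pr = 0)
    (hposdef : (covM Pr (fun ω (q : Fin T × Fin d) => Y ((q.1 : ℕ) + 1) ω q.2)
        (fun ω (q : Fin T × Fin d) => Y ((q.1 : ℕ) + 1) ω q.2)).PosDef)
    -- (i) within-regime Markov order k − 1
    (hwithin : ∀ t m, t ≤ T → k ≤ m → m + 1 ≤ t →
      (∀ s, t - m ≤ s → s ≤ t → v s = v t) →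
      CondIndepFun
        (MeasurableSpace.comap
          (fun ω (j : Fin (k - 1)) => Y (t - k + 1 + (j : ℕ)) ω) inferInstance)
        ((measurable_pi_lambda _ fun _ => hYm _).comap_le)
        (Y t) (fun ω (j : Fin (m - k + 1)) => Y (t - m + (j : ℕ)) ω) Pr)
    -- (ii)(a)
    (hswitchA : ∀ tstar, 2 ≤ tstar → tstar ≤ T → v tstar ≠ v (tstar - 1) →
      covM Pr (Y tstar) (Y (tstar - 1))
        = Matrix.diagonal ρ * covM Pr (Y (tstar - 1)) (Y (tstar - 1)))
    -- (ii)(b)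
    (hswitchB : ∀ tstar, 2 ≤ tstar → tstar ≤ T → v tstar ≠ v (tstar - 1) →
      ∀ s, 1 ≤ s → s + 2 ≤ tstar →
      CondIndepFun (MeasurableSpace.comap (Y (tstar - 1)) inferInstance)
        ((hYm _).comap_le) (Y tstar) (Y s) Pr)
    -- (ii)(c)
    (hswitchC : ∀ tstar, 2 ≤ tstar → tstar ≤ T → v tstar ≠ v (tstar - 1) →
      ∀ j, 1 ≤ j → tstar + j ≤ T → ∀ s, 1 ≤ s → s + 1 ≤ tstar →
      covM Pr (Y (tstar + j)) (Y s) = 0) :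
    -- conclusion: the process is Markov of order k
    ∀ t, k + 2 ≤ t → t ≤ T →
      CondIndepFun
        (MeasurableSpace.comap
          (fun ω (j : Fin k) => Y (t - k + (j : ℕ)) ω) inferInstance)
        ((measurable_pi_lambda _ fun _ => hYm _).comap_le)
        (Y t) (fun ω (s : Fin (t - k - 1)) => Y ((s : ℕ) + 1) ω) Pr := by

  classical
  let F : Fin T × Fin d → Ω → ℝ := fun q ω => Y ((q.1 : ℕ) + 1) ω q.2
  have hF : ∀ q, Measurable (F q) := fun q => (measurable_pi_apply q.2).comp (hYm _)
  have hG : HasGaussianLaw (fun ω q => F q ω) Pr :=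
    IsGaussianVec.hasGaussianLaw (measurable_pi_lambda _ hF) hGauss
  have hL : ∀ q, MemLp (F q) 2 Pr := fun q => hG.memLp_two.eval q
  have hF0 : ∀ q, ∫ ω, F q ω ∂Pr = 0 := fun q => hmean _ (by omega) (by omega) _
  let idx : ℕ → Fin T := fun t => ⟨min (t - 1) (T - 1), by omega⟩
  have hidx : ∀ t i, 1 ≤ t → t ≤ T → F (idx t, i) = fun ω => Y t ω i := by
    intro t i h1 h2
    have : min (t - 1) (T - 1) + 1 = t := by omega
    simp only [F, idx, this]
  let y : ℕ → Fin d → Lp ℝ 2 Pr := fun t i => (hL (idx t, i)).toLp (F (idx t, i))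
  have hinner : ∀ t s i j, 1 ≤ t → t ≤ T → 1 ≤ s → s ≤ T →
      ⟪y t i, y s j⟫ = covM Pr (Y t) (Y s) i j := by
    intro t s i j ht htT hs hsT
    simp only [y, inner_toLp, covM, Matrix.of_apply, hmean t ht htT, zero_mul, sub_zero]
    rw [hidx t i ht htT, hidx s j hs hsT]
  have hspan : ∀ a n b, a + n = b → blockSpan y a b = Submodule.span ℝ (Set.range
      fun q : Fin n × Fin d => (hL (idx (a + q.1), q.2)).toLp (F (idx (a + q.1), q.2))) := by
    rintro a n _ rfl
    refine congrArg (Submodule.span ℝ) (Set.ext fun x => ⟨?_, ?_⟩)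
    · rintro ⟨⟨s, j⟩, ⟨⟨h1, h2⟩, -⟩, rfl⟩
      simp only at h1 h2
      obtain ⟨r, rfl⟩ := Nat.exists_eq_add_of_le h1
      exact ⟨(⟨r, by omega⟩, j), rfl⟩
    · rintro ⟨⟨r, j⟩, rfl⟩
      exact ⟨(a + r, j), ⟨⟨by simp, by simp⟩, Set.mem_univ _⟩, rfl⟩
  have hcomap : ∀ a n, 1 ≤ a → a + n ≤ T + 1 →
      MeasurableSpace.comap (fun ω (j : Fin n) => Y (a + (j : ℕ)) ω) inferInstance
        = MeasurableSpace.comap (fun ω (q : Fin n × Fin d) => F (idx (a + q.1), q.2) ω)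
          inferInstance := by
    intro a n ha hn
    rw [← comap_uncurry_eq fun (j : Fin n) ω => Y (a + (j : ℕ)) ω]
    congr 1
    ext ω q
    rw [hidx _ _ (by omega) (by omega)]
  have hYcomp : ∀ t i, 1 ≤ t → t ≤ T → F (idx t, i) = (fun u : Fin d → ℝ => u i) ∘ Y t :=
    fun t i ht htT => hidx t i ht htT
  have hwithin' : ∀ t m, t ≤ T → k ≤ m → m + 1 ≤ t → (∀ s, t - m ≤ s → s ≤ t → v s = v t) →
      ∀ i, ∀ p ∈ blockSpan y (t - k + 1) t,
        (∀ w ∈ blockSpan y (t - k + 1) t, ⟪y t i - p, w⟫ = 0) →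
        ∀ s j, t - m ≤ s → s ≤ t - k → ⟪y t i - p, y s j⟫ = 0 := by
    intro t m htT hkm hmt hv i p hp hpw s j hs hsk
    have hcond := (hwithin t m htT hkm hmt hv).congr_measurableSpace
      (hcomap (t - k + 1) (k - 1) (by omega) (by omega))
      (measurable_pi_lambda _ fun _ => hF _).comap_le
    have hcond' := hcond.comp (measurable_pi_apply i)
      (show Measurable fun u : Fin (m - k + 1) → Fin d → ℝ => u ⟨s - (t - m), by omega⟩ j by
        fun_prop)
    have ht : t - k + 1 + (k - 1) = t := by omega
    refine CondIndepFun.inner_residual_eq_zero hL hF hG hF0 (i := (idx t, i)) (l := (idx s, j))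
      (a := fun q : Fin (k - 1) × Fin d => (idx (t - k + 1 + q.1), q.2))
      ?_ ((hspan (t - k + 1) (k - 1) t ht).le hp)
      fun q => hpw _ (mem_blockSpan y (s := t - k + 1 + q.1) (by omega) (by omega) q.2)
    convert hcond' using 1
    · exact hYcomp t i (by omega) htT
    · rw [hidx s j (by omega) (by omega)]
      ext ω
      simp only [Function.comp_apply]
      rw [show t - m + (s - (t - m)) = s by omega]
  have hswitch : ∀ τ, 2 ≤ τ → τ ≤ T → v τ ≠ v (τ - 1) →
      ∀ i s j, 1 ≤ s → s < τ → ⟪y τ i - ρ i • y (τ - 1) i, y s j⟫ = 0 := by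
    intro τ hτ hτT hτv i s j hs hsτ
    have hprev : ∀ j, ⟪y τ i - ρ i • y (τ - 1) i, y (τ - 1) j⟫ = 0 := by
      intro j
      rw [inner_sub_left, real_inner_smul_left, hinner _ _ _ _ (by omega) hτT (by omega) (by omega),
        hinner _ _ _ _ (by omega) (by omega) (by omega) (by omega), hswitchA τ hτ hτT hτv,
        Matrix.diagonal_mul, sub_self]
    rcases (show s ≤ τ - 1 by omega).eq_or_lt with rfl | hlt
    · exact hprev j
    have hcond := (hswitchB τ hτ hτT hτv s hs (by omega)).comp (measurable_pi_apply i)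
      (measurable_pi_apply j)
    have hm : MeasurableSpace.comap (Y (τ - 1)) inferInstance
        = MeasurableSpace.comap (fun ω l => F (idx (τ - 1), l) ω) inferInstance := by
      congr 1
      ext ω l
      rw [hidx _ _ (by omega) (by omega)]
    have hcond' := hcond.congr_measurableSpace hm (measurable_pi_lambda _ fun _ => hF _).comap_le
    refine CondIndepFun.inner_residual_eq_zero hL hF hG hF0 (fun l => (idx (τ - 1), l))
      (i := (idx τ, i)) (l := (idx s, j)) ?_
      (Submodule.smul_mem _ _ (Submodule.subset_span ⟨i, rfl⟩)) hprev
    rw [hYcomp τ i (by omega) hτT, hYcomp s j hs (by omega)]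
    exact hcond'
  have hafter : ∀ τ, 2 ≤ τ → τ ≤ T → v τ ≠ v (τ - 1) →
      ∀ r, τ < r → r ≤ T → ∀ s, 1 ≤ s → s < τ → ∀ i j, ⟪y r i, y s j⟫ = 0 := by
    intro τ hτ hτT hτv r hr hrT s hs hsτ i j
    have h := hswitchC τ hτ hτT hτv (r - τ) (by omega) (by omega) s hs (by omega)
    rw [show τ + (r - τ) = r by omega] at h
    rw [hinner _ _ _ _ (by omega) hrT hs (by omega), h, Matrix.zero_apply]
  intro t hkt htT
  have hcore := exists_mem_blockSpan_orthogonal_past y v ρ hk hwithin' hswitch hafter hkt htT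
  have hmain := condIndepFun_of_residual_orthogonal hL hF hG hF0
    (fun q : Fin k × Fin d => (idx (t - k + q.1), q.2))
    (fun q : Fin (t - k - 1) × Fin d => (idx ((q.1 : ℕ) + 1), q.2))
    (fun i : Fin d => (idx t, i)) fun i => by
      obtain ⟨p, hp, horth⟩ := hcore i
      have ht : t - k + k = t := by omega
      exact ⟨p, (hspan (t - k) k t ht).le hp,
        fun q => horth _ q.2 (by omega) (by omega), fun q => horth _ q.2 (by omega) (by omega)⟩
  have hmain' := (hmain.congr_measurableSpace (hcomap (t - k) k (by omega) (by omega)).symm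
    (measurable_pi_lambda _ fun _ => hYm _).comap_le).comp measurable_id
    (show Measurable fun (u : Fin (t - k - 1) × Fin d → ℝ) s i => u (s, i) by fun_prop)
  convert hmain' using 1
  · ext ω i
    simp only [Function.comp_apply, id_eq]
    rw [hidx t i (by omega) htT]
  · ext ω s i
    simp only [Function.comp_apply]
    rw [hidx _ _ (by omega) (by omega)]
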